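/- arXiv:1903.05878 — 2 statements merged into one kernel-verified Lean document; each statement's English description precedes it below -/
import Mathlib

section
/- (Infinite Plays from Paths) Let U be a set of game positions and u₀ a game position such that U is a path from u₀ and for all u, v ∈ U, gsucc u v implies u ⟶ v. Then U is an infinite play of the game from u₀. -/
namespace TreeGames

variable {D P O : Type*}

/-- Strict prefix order on tree positions `x < y`. -/
def TLt (x y : List D) : Prop := x <+: y ∧ x ≠ y

/-- The relation `u ⊏ v` on game positions. -/
def Glt (u v : List D × (P ⊕ O)) : Prop :=
  TLt u.1 v.1 ∨ (u.1 = v.1 ∧ (∃ k, u.2 = Sum.inl k) ∧ (∃ l, v.2 = Sum.inr l))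

/-- The relation `u ⊑ v` on game positions. -/
def Gle (u v : List D × (P ⊕ O)) : Prop := Glt u v ∨ u = v

/-- `v` is an immediate successor of `u`. -/
def Gsucc (u v : List D × (P ⊕ O)) : Prop :=
  Glt u v ∧ ¬ ∃ w : List D × (P ⊕ O), Glt u w ∧ Glt w v

/-- `U` is a path from `u₀`. -/
def IsPath (u₀ : List D × (P ⊕ O)) (U : Set (List D × (P ⊕ O))) : Prop :=
  u₀ ∈ U ∧ (∀ v ∈ U, Gle u₀ v) ∧ (∀ v ∈ U, ∃ w ∈ U, Gsucc v w) ∧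
  (∀ v ∈ U, ∀ w ∈ U, Glt v w ∨ v = w ∨ Glt w v)

/-- The edge relation of the game given by `eP`, `eO`. -/
def Edge (eP : List D × P → Set O) (eO : List D × O → Set (D × P))
    (u v : List D × (P ⊕ O)) : Prop :=
  (∃ x k l, u = (x, Sum.inl k) ∧ v = (x, Sum.inr l) ∧ l ∈ eP (x, k)) ∨
  (∃ x l d k, u = (x, Sum.inr l) ∧ v = (x ++ [d], Sum.inl k) ∧ (d, k) ∈ eO (x, l))

/-- `U` is an infinite play of the game with edge relation `r` from `u₀`. -/
def IsPlay {α : Type*} (r : α → α → Prop) (u₀ : α) (U : Set α) : Prop :=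
  u₀ ∈ U ∧ (∀ v ∈ U, Relation.ReflTransGen r u₀ v) ∧
  (∀ v ∈ U, ∃ w ∈ U, r v w) ∧
  (∀ v ∈ U, ∀ w ∈ U, Relation.TransGen r v w ∨ v = w ∨ Relation.TransGen r w v)

/-- Rank of a game position. -/
def grank (u : List D × (P ⊕ O)) : ℕ := 2 * u.1.length + Sum.elim (fun _ => 0) (fun _ => 1) u.2

theorem grank_lt {u v : List D × (P ⊕ O)} (h : Glt u v) : grank u < grank v := by
  obtain ⟨x, a⟩ := u
  obtain ⟨y, b⟩ := v
  rcases h with ⟨h1, h2⟩ | ⟨h1, ⟨k, hk⟩, ⟨l, hl⟩⟩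
  · have hlen : x.length < y.length := by
      rcases Nat.lt_or_ge x.length y.length with h | h
      · exact h
      · exact absurd (h1.eq_of_length_le h) h2
    rcases a with a | a <;> rcases b with b | b <;> simp [grank] <;> omega
  · simp only at h1 hk hl
    subst h1 hk hl
    simp [grank]

theorem transGen_of_glt (eP : List D × P → Set O) (eO : List D × O → Set (D × P))
    (u₀ : List D × (P ⊕ O)) (U : Set (List D × (P ⊕ O)))
    (hpath : IsPath u₀ U)
    (hsucc : ∀ u ∈ U, ∀ v ∈ U, Gsucc u v → Edge eP eO u v) (n : ℕ) :
    ∀ v ∈ U, ∀ w ∈ U, Glt v w → grank w - grank v ≤ n →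
      Relation.TransGen (Edge eP eO) v w := by
  induction n with
  | zero =>
    intro v _ w _ h hn
    have := grank_lt h
    omega
  | succ n ih =>
    intro v hv w hw h hn
    obtain ⟨s, hs, hvs⟩ := hpath.2.2.1 v hv
    have e := hsucc v hv s hs hvs
    rcases hpath.2.2.2 s hs w hw with c | c | c
    · refine Relation.TransGen.head e (ih s hs w hw c ?_)
      have := grank_lt hvs.1
      have := grank_lt c
      omega
    · exact c ▸ Relation.TransGen.single e
    · exact absurd ⟨w, h, c⟩ hvs.2

theorem play_from_path [Fintype D] [Nonempty D] [Fintype P] [Nonempty P]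
    [Fintype O] [Nonempty O]
    (eP : List D × P → Set O) (eO : List D × O → Set (D × P))
    (hP : ∀ p, (eP p).Nonempty) (hO : ∀ p, (eO p).Nonempty)
    (u₀ : List D × (P ⊕ O)) (U : Set (List D × (P ⊕ O)))
    (hpath : IsPath u₀ U)
    (hsucc : ∀ u ∈ U, ∀ v ∈ U, Gsucc u v → Edge eP eO u v) :
    IsPlay (Edge eP eO) u₀ U := by
  have key : ∀ v ∈ U, ∀ w ∈ U, Glt v w → Relation.TransGen (Edge eP eO) v w :=
    fun v hv w hw h => transGen_of_glt eP eO u₀ U hpath hsucc _ v hv w hw h le_rfl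
  refine ⟨hpath.1, fun v hv => ?_, fun v hv => ?_, fun v hv w hw => ?_⟩
  · rcases hpath.2.1 v hv with h | h
    · exact (key _ hpath.1 v hv h).to_reflTransGen
    · exact h ▸ Relation.ReflTransGen.refl
  · obtain ⟨w, hw, h⟩ := hpath.2.2.1 v hv
    exact ⟨w, hw, hsucc v hv w hw h⟩
  · rcases hpath.2.2.2 v hv w hw with h | h | h
    · exact Or.inl (key v hv w hw h)
    · exact Or.inr (Or.inl h)
    · exact Or.inr (Or.inr (key w hw v hv h))

end TreeGames
end

section
/- (Complementation of Alternating Parity Tree Automata) Let A be a parity automaton over Σ with coloring c. Define the parity automaton ¬A over Σ with the same states and initial state as A, transitions δ_{¬A} (q, a) = { C̄ : Set (D × Q) | C̄ is nonempty and C̄ ∩ C is nonempty for every C ∈ δ_A (q, a) }, and coloring q ↦ c q + 1. Then for every tree F : List D → Σ: F ∈ L(¬A) if and only if F ∉ L(A). -/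
namespace TreeGames

variable {D P O : Type*}

/-- Proponent edge function of the acceptance game `G(A,F)`:
`eP (x, q) = {(q, C) | C ∈ δ (q, F x)}`. -/
def AccEP {Q A : Type*} (δ : Q × A → Set (Set (D × Q))) (F : List D → A) :
    List D × Q → Set (Q × Set (D × Q)) :=
  fun p => {w : Q × Set (D × Q) | w.1 = p.2 ∧ w.2 ∈ δ (p.2, F p.1)}

/-- Opponent edge function of the acceptance game: `eO (x, (q, C)) = C`. -/
def AccEO {Q : Type*} : List D × (Q × Set (D × Q)) → Set (D × Q) := fun p => p.2.2

/-- Extension of a coloring of states to game positions. -/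
def HatC {Q : Type*} (c : Q → ℕ) : List D × (Q ⊕ Q × Set (D × Q)) → ℕ :=
  fun u => Sum.elim c (fun w => c w.1) u.2

/-- The parity condition on a set `U` of positions of an acceptance game. -/
def Par {Q : Type*} (c : Q → ℕ) (U : Set (List D × (Q ⊕ Q × Set (D × Q)))) : Prop :=
  ∃ m : ℕ, Even m ∧ (∀ u ∈ U, ∃ v ∈ U, Glt u v ∧ HatC c v = m) ∧
    (∃ u ∈ U, ∀ v ∈ U, Glt u v → m ≤ HatC c v)

/-- The parity automaton with transitions `δ`, coloring `c` and initial state `q₀`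
accepts the input tree `F` : there is a Proponent strategy in the acceptance game
winning from the root for the parity condition. -/
def Accepts {Q A : Type*} (δ : Q × A → Set (Set (D × Q))) (c : Q → ℕ) (q₀ : Q)
    (F : List D → A) : Prop :=
  ∃ σ : List D × Q → Q × Set (D × Q),
    (∀ p, σ p ∈ AccEP δ F p) ∧
    ∀ U : Set (List D × (Q ⊕ Q × Set (D × Q))),
      IsPlay (Edge (fun p => ({σ p} : Set (Q × Set (D × Q)))) AccEO)
        ((([] : List D), Sum.inl q₀)) U → Par c U

/-- Well-formedness of an automaton transition function: each `δ (q, a)` is a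
nonempty set of nonempty conjunctions. -/
def AutWF {Q A : Type*} (δ : Q × A → Set (Set (D × Q))) : Prop :=
  ∀ q a, (δ (q, a)).Nonempty ∧ ∀ C ∈ δ (q, a), C.Nonempty

/-- The automaton is nondeterministic: within any conjunction, each direction
determines at most one state. -/
def NonDet {Q A : Type*} (δ : Q × A → Set (Set (D × Q))) : Prop :=
  ∀ q a, ∀ C ∈ δ (q, a), ∀ d : D, ∀ q₁ q₂ : Q, (d, q₁) ∈ C → (d, q₂) ∈ C → q₁ = q₂


section Generic
universe u w
variable {V : Type u} {A : Type w}

def PPhi (P : Set V → Set V) (c : V → ℕ) (E : ℕ → Prop) : ℕ → ℕ → Set V → Set V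
  | 0, _, Y => Y
  | k+1, i, Y => {v | (E i ∧ v ∈ sSup {X : Set V | X ≤ PPhi P c E k (i+1) (Y ∪ {v | c v = i ∧ v ∈ P X})}) ∨
      (¬ E i ∧ v ∈ sInf {X : Set V | PPhi P c E k (i+1) (Y ∪ {v | c v = i ∧ v ∈ P X}) ≤ X})}

theorem PPhi_succ_pos (P : Set V → Set V) (c : V → ℕ) (E : ℕ → Prop) (k i) (Y) (h : E i) :
    PPhi P c E (k+1) i Y = sSup {X : Set V | X ≤ PPhi P c E k (i+1) (Y ∪ {v | c v = i ∧ v ∈ P X})} := by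
  ext v; simp only [PPhi, Set.mem_ofPred_eq, h, true_and, not_true, false_and, or_false]

theorem PPhi_succ_neg (P : Set V → Set V) (c : V → ℕ) (E : ℕ → Prop) (k i) (Y) (h : ¬ E i) :
    PPhi P c E (k+1) i Y = sInf {X : Set V | PPhi P c E k (i+1) (Y ∪ {v | c v = i ∧ v ∈ P X}) ≤ X} := by
  ext v; simp only [PPhi, Set.mem_ofPred_eq, h, true_and, not_false_eq_true, false_and, false_or]

theorem PPhi_mono (P : Set V → Set V) (c : V → ℕ) (E : ℕ → Prop) (k : ℕ) :
    ∀ i, Monotone (PPhi P c E k i) := by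
  induction k with
  | zero => intro i Y Y' h; exact h
  | succ k ih =>
    intro i Y Y' h
    by_cases hE : E i
    · rw [PPhi_succ_pos _ _ _ _ _ _ hE, PPhi_succ_pos _ _ _ _ _ _ hE]
      apply sSup_le_sSup
      intro X hX
      exact le_trans hX (ih _ (Set.union_subset_union_left _ h))
    · rw [PPhi_succ_neg _ _ _ _ _ _ hE, PPhi_succ_neg _ _ _ _ _ _ hE]
      apply sInf_le_sInf
      intro X hX
      exact le_trans (ih _ (Set.union_subset_union_left _ h)) hX

theorem step_mono (P : Set V → Set V) (hP : Monotone P) (c : V → ℕ) (E : ℕ → Prop) (k i : ℕ) (Y : Set V) :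
    Monotone (fun X => PPhi P c E k (i+1) (Y ∪ {v | c v = i ∧ v ∈ P X})) := by
  intro X X' h
  apply PPhi_mono
  apply Set.union_subset_union_right
  rintro v ⟨h1, h2⟩
  exact ⟨h1, hP h h2⟩

theorem PPhi_compl (P P' : Set V → Set V) (hd : ∀ X, P' X = (P Xᶜ)ᶜ) (c : V → ℕ) (E : ℕ → Prop) (k : ℕ) :
    ∀ i Y, (∀ v, c v < i + k) → (∀ v ∈ Y, c v < i) →
      (PPhi P c E k i Y)ᶜ = PPhi P' c (fun m => ¬ E m) k i ({v | c v < i} \ Y) := by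
  induction k with
  | zero =>
    intro i Y hc hY
    ext v; have := hc v
    simp only [PPhi, Set.mem_compl_iff, Set.mem_sdiff, Set.mem_ofPred_eq]
    constructor
    · intro h; exact ⟨by simpa using this, h⟩
    · exact fun h => h.2
  | succ k ih =>
    intro i Y hc hY
    have key : ∀ X : Set V, (PPhi P c E k (i+1) (Y ∪ {v | c v = i ∧ v ∈ P X}))ᶜ =
        PPhi P' c (fun m => ¬ E m) k (i+1) (({v | c v < i} \ Y) ∪ {v | c v = i ∧ v ∈ P' Xᶜ}) := by
      intro X
      rw [ih (i+1) _ (fun v => by have := hc v; omega)]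
      · congr 1
        ext v
        have h1 := hY v
        simp only [hd, compl_compl, Set.mem_sdiff, Set.mem_union, Set.mem_ofPred_eq, Set.mem_compl_iff]
        constructor
        · rintro ⟨a, b⟩
          push Not at b
          by_cases hv : c v = i
          · exact Or.inr ⟨hv, b.2 hv⟩
          · exact Or.inl ⟨by omega, b.1⟩
        · rintro (⟨a, b⟩ | ⟨a, b⟩)
          · refine ⟨by omega, ?_⟩
            rintro (h | h)
            · exact b h
            · omega
          · refine ⟨by omega, ?_⟩
            rintro (h | h)
            · have := h1 h; omega
            · exact b h.2
      · rintro v (h | h)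
        · have := hY v h; omega
        · have := h.1; omega
    by_cases hE : E i
    · rw [PPhi_succ_pos _ _ _ _ _ _ hE, PPhi_succ_neg _ _ _ _ _ _ (not_not.2 hE)]
      ext v
      simp only [Set.mem_compl_iff, Set.sSup_eq_sUnion, Set.sInf_eq_sInter, Set.mem_sUnion, Set.mem_sInter, Set.mem_ofPred_eq]
      constructor
      · intro h X hX
        by_contra hv
        refine h ⟨Xᶜ, ?_, hv⟩
        have := key Xᶜ
        rw [compl_compl] at this
        rw [← this] at hX
        exact Set.compl_subset_comm.1 hX
      · rintro h ⟨X, hX, hv⟩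
        refine h Xᶜ ?_ hv
        rw [← key X]
        exact Set.compl_subset_compl.2 hX
    · rw [PPhi_succ_neg _ _ _ _ _ _ hE, PPhi_succ_pos _ _ _ _ _ _ hE]
      ext v
      simp only [Set.mem_compl_iff, Set.sSup_eq_sUnion, Set.sInf_eq_sInter, Set.mem_sUnion, Set.mem_sInter, Set.mem_ofPred_eq]
      constructor
      · intro h
        push Not at h
        obtain ⟨X, hX, hv⟩ := h
        refine ⟨Xᶜ, ?_, hv⟩
        rw [← key X]
        exact Set.compl_subset_compl.2 hX
      · rintro ⟨X, hX, hv⟩ h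
        refine h Xᶜ ?_ hv
        have := key Xᶜ
        rw [compl_compl] at this
        rw [← this] at hX
        exact Set.subset_compl_comm.1 hX

def WinSeq (c : V → ℕ) (E : ℕ → Prop) (s : ℕ → V) : Prop :=
  ∃ m, E m ∧ (∀ n, ∃ j, n < j ∧ c (s j) = m) ∧ ∃ n, ∀ j, n < j → m ≤ c (s j)

theorem WinSeq_tail (c : V → ℕ) (E : ℕ → Prop) (s : ℕ → V) (N : ℕ)
    (h : WinSeq c E (fun n => s (N + n))) : WinSeq c E s := by
  obtain ⟨m, hm, h1, n, h2⟩ := h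
  refine ⟨m, hm, fun n => ?_, N + n, fun j hj => ?_⟩
  · obtain ⟨j, hj, e⟩ := h1 n
    exact ⟨N + j, by omega, e⟩
  · have := h2 (j - N) (by omega)
    have e : N + (j - N) = j := by omega
    simpa only [e] using this

def Cpre (M : V → Set A) (post : V → A → Set V) (X : Set V) : Set V :=
  {v | ∃ a ∈ M v, post v a ⊆ X}

theorem Cpre_mono (M : V → Set A) (post : V → A → Set V) : Monotone (Cpre M post) := by
  rintro X X' h v ⟨a, ha, hp⟩
  exact ⟨a, ha, hp.trans h⟩

theorem strat [Nonempty A] (M : V → Set A) (post : V → A → Set V) (c : V → ℕ) (E : ℕ → Prop) (k : ℕ) :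
    ∀ i Y, (∀ v, c v < i + k) → (∀ v ∈ Y, c v < i) →
    ∃ τ : V → A, (∀ v ∈ PPhi (Cpre M post) c E k i Y, v ∉ Y → i ≤ c v ∧ τ v ∈ M v ∧
        post v (τ v) ⊆ PPhi (Cpre M post) c E k i Y) ∧
      ∀ s : ℕ → V, (∀ n, s n ∈ PPhi (Cpre M post) c E k i Y ∧ s n ∉ Y) →
        (∀ n, s (n+1) ∈ post (s n) (τ (s n))) → WinSeq c E s := by
  classical
  induction k with
  | zero =>
    intro i Y hc hY
    refine ⟨fun _ => Classical.arbitrary A, fun v hv hv' => absurd hv hv', fun s hs => absurd (hs 0).1 (hs 0).2⟩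
  | succ k ih =>
    intro i Y hc hY
    have hY' : ∀ X : Set V, ∀ v ∈ Y ∪ {v | c v = i ∧ v ∈ Cpre M post X}, c v < i + 1 := by
      rintro X v (h | h)
      · have := hY v h; omega
      · have := h.1; omega
    have IH := fun X => ih (i+1) (Y ∪ {v | c v = i ∧ v ∈ Cpre M post X})
      (fun v => by have := hc v; omega) (hY' X)
    choose T hT1 hT2 using IH
    have hch : ∀ X v, ∃ a, v ∈ Cpre M post X → a ∈ M v ∧ post v a ⊆ X := by
      intro X v
      by_cases h : v ∈ Cpre M post X
      · obtain ⟨a, ha⟩ := h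
        exact ⟨a, fun _ => ha⟩
      · exact ⟨Classical.arbitrary A, fun h' => absurd h' h⟩
    choose ch hch using hch
    let g : Set V →o Set V := ⟨_, step_mono (Cpre M post) (Cpre_mono M post) c E k i Y⟩
    have hg : ∀ X, g X = PPhi (Cpre M post) c E k (i+1) (Y ∪ {v | c v = i ∧ v ∈ Cpre M post X}) :=
      fun X => rfl
    by_cases hE : E i
    · have hW : PPhi (Cpre M post) c E (k+1) i Y = g.gfp := PPhi_succ_pos _ _ _ _ _ _ hE
      rw [hW]
      set W := g.gfp with hWdef
      have hfix : g W = W := g.map_gfp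
      have h1 := hT1 W
      have h2 := hT2 W
      rw [← hg, hfix] at h1 h2
      refine ⟨fun v => if c v = i ∧ v ∈ Cpre M post W then ch W v else T W v, ?_, ?_⟩
      · intro v hv hvY
        by_cases hz : c v = i ∧ v ∈ Cpre M post W
        · simp only [if_pos hz]
          exact ⟨hz.1.ge, hch W v hz.2⟩
        · simp only [if_neg hz]
          obtain ⟨a, b⟩ := h1 v hv (by rintro (h | h); exacts [hvY h, hz h])
          exact ⟨by omega, b⟩
      · intro s hs hp
        have hge : ∀ n, i ≤ c (s n) := by
          intro n
          by_cases hz : c (s n) = i ∧ s n ∈ Cpre M post W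
          · exact hz.1.ge
          · have := (h1 (s n) (hs n).1 (by rintro (h | h); exacts [(hs n).2 h, hz h])).1
            omega
        by_cases hinf : ∀ n, ∃ j, n < j ∧ (c (s j) = i ∧ s j ∈ Cpre M post W)
        · refine ⟨i, hE, fun n => ?_, 0, fun j _ => hge j⟩
          obtain ⟨j, hj, h, _⟩ := hinf n
          exact ⟨j, hj, h⟩
        · push Not at hinf
          obtain ⟨N, hN⟩ := hinf
          have hN' : ∀ n, ¬ (c (s (N+1+n)) = i ∧ s (N+1+n) ∈ Cpre M post W) :=
            fun n h => hN (N+1+n) (by omega) h.1 h.2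
          apply WinSeq_tail c E s (N+1)
          apply h2
          · intro n
            refine ⟨(hs _).1, ?_⟩
            rintro (h | h)
            · exact (hs _).2 h
            · exact hN' n h
          · intro n
            have := hp (N+1+n)
            simp only [if_neg (hN' n)] at this
            exact this
    · have hW : PPhi (Cpre M post) c E (k+1) i Y = g.lfp := PPhi_succ_neg _ _ _ _ _ _ hE
      rw [hW]
      set W := g.lfp with hWdef
      have hfix : g W = W := g.map_lfp
      let X : Ordinal.{u} → Set V := OrdinalApprox.lfpApprox g ⊥
      have hX : ∀ a v, v ∈ X a ↔ ∃ b < a, v ∈ g (X b) := by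
        intro a v
        show v ∈ OrdinalApprox.lfpApprox g ⊥ a ↔ _
        rw [OrdinalApprox.lfpApprox]
        simp only [Set.sup_eq_union, Set.bot_eq_empty, Set.empty_union, Set.iSup_eq_iUnion,
          Set.mem_iUnion, exists_prop]
        rfl
      have hXW : ∀ a, X a ⊆ W := fun a => OrdinalApprox.lfpApprox_le_of_mem_fixedPoints g hfix bot_le a
      have hex : ∀ v ∈ W, ∃ b, v ∈ g (X b) := by
        obtain ⟨a, ha⟩ := OrdinalApprox.lfp_mem_range_lfpApprox g
        intro v hv
        have : v ∈ X a := by show v ∈ OrdinalApprox.lfpApprox g ⊥ a; rw [ha]; exact hv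
        obtain ⟨b, _, hb⟩ := (hX a v).1 this
        exact ⟨b, hb⟩
      let r : V → Ordinal.{u} := fun v => sInf {b | v ∈ g (X b)}
      have hr : ∀ v ∈ W, v ∈ g (X (r v)) := fun v hv => csInf_mem (s := {b | v ∈ g (X b)}) (hex v hv)
      have hrle : ∀ v b, v ∈ g (X b) → r v ≤ b := fun v b h => csInf_le' h
      have hgW : ∀ a, g (X a) ⊆ W := fun a => by
        rw [← hfix]; exact g.mono (hXW a)
      -- strategy
      let τ : V → A := fun v => if c v = i ∧ v ∈ Cpre M post (X (r v)) then ch (X (r v)) v else T (X (r v)) v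
      have hτ1 : ∀ v, (c v = i ∧ v ∈ Cpre M post (X (r v))) → τ v = ch (X (r v)) v := fun v h => if_pos h
      have hτ2 : ∀ v, ¬ (c v = i ∧ v ∈ Cpre M post (X (r v))) → τ v = T (X (r v)) v := fun v h => if_neg h
      have hst : ∀ v ∈ W, v ∉ Y → (c v = i ∧ v ∈ Cpre M post (X (r v))) →
          ∀ u ∈ post v (τ v), u ∈ W ∧ r u < r v := by
        intro v hv hvY hz u hu
        rw [hτ1 v hz] at hu
        have := (hch _ v hz.2).2 hu
        obtain ⟨b, hb, hub⟩ := (hX _ _).1 this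
        exact ⟨hXW _ this, (hrle u b hub).trans_lt hb⟩
      have hns : ∀ v ∈ W, v ∉ Y → ¬ (c v = i ∧ v ∈ Cpre M post (X (r v))) →
          i ≤ c v ∧ τ v ∈ M v ∧ post v (τ v) ⊆ g (X (r v)) := by
        intro v hv hvY hz
        rw [hτ2 v hz]
        obtain ⟨a, b⟩ := hT1 (X (r v)) v (hr v hv) (by rintro (h | h); exacts [hvY h, hz h])
        exact ⟨by omega, b⟩
      refine ⟨τ, ?_, ?_⟩
      · intro v hv hvY
        by_cases hz : c v = i ∧ v ∈ Cpre M post (X (r v))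
        · refine ⟨hz.1.ge, ?_, fun u hu => (hst v hv hvY hz u hu).1⟩
          rw [hτ1 v hz]; exact (hch _ v hz.2).1
        · obtain ⟨a, b, d⟩ := hns v hv hvY hz
          exact ⟨a, b, d.trans (hgW _)⟩
      · intro s hs hp
        have hdec : ∀ n, r (s (n+1)) ≤ r (s n) := by
          intro n
          by_cases hz : c (s n) = i ∧ s n ∈ Cpre M post (X (r (s n)))
          · exact (hst _ (hs n).1 (hs n).2 hz _ (hp n)).2.le
          · exact hrle _ _ ((hns _ (hs n).1 (hs n).2 hz).2.2 (hp n))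
        have hanti : Antitone (fun n => r (s n)) := antitone_nat_of_succ_le hdec
        obtain ⟨N, hN⟩ : ∃ N, ∀ n, r (s N) ≤ r (s n) := by
          have hne : (Set.range (fun n => r (s n))).Nonempty := ⟨_, 0, rfl⟩
          obtain ⟨N, hN⟩ := csInf_mem hne
          refine ⟨N, fun n => ?_⟩
          have : r (s N) = _ := hN
          rw [this]
          exact csInf_le' ⟨n, rfl⟩
        have hconst : ∀ n, r (s (N + n)) = r (s N) := fun n =>
          le_antisymm (hanti (Nat.le_add_right N n)) (hN _)
        have hnz : ∀ n, ¬ (c (s (N+n)) = i ∧ s (N+n) ∈ Cpre M post (X (r (s (N+n))))) := by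
          intro n hz
          have := (hst _ (hs _).1 (hs _).2 hz _ (hp _)).2
          rw [hconst n] at this
          exact absurd (hN _) (not_le.2 this)
        apply WinSeq_tail c E s N
        apply hT2 (X (r (s N)))
        · intro n
          have h1 := hr _ (hs (N+n)).1
          have h2 := hnz n
          rw [hconst n] at h1 h2
          refine ⟨h1, ?_⟩
          rintro (h | h)
          · exact (hs _).2 h
          · exact h2 h
        · intro n
          have := hp (N+n)
          rw [hτ2 _ (hnz n), hconst n] at this
          exact this

theorem strat0 (M : V → Set A) (hM : ∀ v, (M v).Nonempty) (post : V → A → Set V) (c : V → ℕ) (E : ℕ → Prop) (K : ℕ)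
    (hK : ∀ v, c v < K) (v₀ : V) (h0 : v₀ ∈ PPhi (Cpre M post) c E K 0 ∅) :
    ∃ τ : V → A, (∀ v, τ v ∈ M v) ∧ ∀ s : ℕ → V, s 0 = v₀ →
        (∀ n, s (n+1) ∈ post (s n) (τ (s n))) → WinSeq c E s := by
  classical
  have : Nonempty A := ⟨(hM v₀).some⟩
  obtain ⟨τ, h1, h2⟩ := strat M post c E K 0 ∅ (by simpa using hK) (by simp)
  refine ⟨fun v => if v ∈ PPhi (Cpre M post) c E K 0 ∅ then τ v else (hM v).some, ?_, ?_⟩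
  · intro v
    by_cases hv : v ∈ PPhi (Cpre M post) c E K 0 ∅
    · simp only [if_pos hv]; exact (h1 v hv (by simp)).2.1
    · simp only [if_neg hv]; exact (hM v).some_mem
  · intro s hs0 hp
    have hin : ∀ n, s n ∈ PPhi (Cpre M post) c E K 0 ∅ := by
      intro n
      induction n with
      | zero => rw [hs0]; exact h0
      | succ n ih =>
        have := hp n
        simp only [if_pos ih] at this
        exact (h1 _ ih (by simp)).2.2 this
    apply h2 s (fun n => ⟨hin n, by simp⟩)
    intro n
    have := hp n
    simp only [if_pos (hin n)] at this
    exact this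

end Generic

section Plays
variable {D P O : Type*}

def gmeas (u : List D × (P ⊕ O)) : ℕ := 2 * u.1.length + Sum.elim (fun _ => 0) (fun _ => 1) u.2

theorem tlt_length {x y : List D} (h : TLt x y) : x.length < y.length := by
  obtain ⟨h1, h2⟩ := h
  rcases Nat.lt_or_ge x.length y.length with h | h
  · exact h
  · exact absurd (h1.eq_of_length_le h) h2

theorem tlt_append (x : List D) (d : D) : TLt x (x ++ [d]) :=
  ⟨List.prefix_append _ _, by simp⟩

theorem tlt_trans {x y z : List D} (h : TLt x y) (h' : TLt y z) : TLt x z := by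
  refine ⟨h.1.trans h'.1, ?_⟩
  rintro rfl
  have := tlt_length h
  have := tlt_length h'
  omega

theorem glt_meas {u v : List D × (P ⊕ O)} (h : Glt u v) : gmeas u < gmeas v := by
  obtain ⟨x, a⟩ := u
  obtain ⟨y, b⟩ := v
  rcases h with h | ⟨h, ⟨k, hk⟩, ⟨l, hl⟩⟩
  · have := tlt_length h
    simp only at this
    rcases a with a | a <;> rcases b with b | b <;> simp only [gmeas, Sum.elim_inl, Sum.elim_inr] <;> omega
  · simp only at h hk hl
    subst h hk hl
    simp [gmeas]

theorem glt_trans {u v w : List D × (P ⊕ O)} (h : Glt u v) (h' : Glt v w) : Glt u w := by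
  rcases h with h | ⟨h, hk, hl⟩
  · rcases h' with h' | ⟨h', _, _⟩
    · exact Or.inl (tlt_trans h h')
    · exact Or.inl (h' ▸ h)
  · rcases h' with h' | ⟨h', ⟨k, hk'⟩, _⟩
    · exact Or.inl (h ▸ h')
    · obtain ⟨l, hl⟩ := hl
      rw [hl] at hk'
      cases hk'

theorem edge_glt {eP : List D × P → Set O} {eO : List D × O → Set (D × P)}
    {u v : List D × (P ⊕ O)} (h : Edge eP eO u v) : Glt u v := by
  rcases h with ⟨x, k, l, rfl, rfl, _⟩ | ⟨x, l, d, k, rfl, rfl, _⟩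
  · exact Or.inr ⟨rfl, ⟨k, rfl⟩, ⟨l, rfl⟩⟩
  · exact Or.inl (tlt_append x d)

theorem edge_meas {eP : List D × P → Set O} {eO : List D × O → Set (D × P)}
    {u v : List D × (P ⊕ O)} (h : Edge eP eO u v) : gmeas v = gmeas u + 1 := by
  rcases h with ⟨x, k, l, rfl, rfl, _⟩ | ⟨x, l, d, k, rfl, rfl, _⟩
  · simp [gmeas]
  · simp [gmeas]; omega

theorem trans_meas {eP : List D × P → Set O} {eO : List D × O → Set (D × P)}
    {u v : List D × (P ⊕ O)} (h : Relation.TransGen (Edge eP eO) u v) : gmeas u < gmeas v := by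
  induction h with
  | single h => have := edge_meas h; omega
  | tail _ h ih => have := edge_meas h; omega

theorem chain_trans {α : Type*} {r : α → α → Prop} {t : ℕ → α} (h : ∀ n, r (t n) (t (n+1))) (i k : ℕ) :
    Relation.TransGen r (t i) (t (i + k + 1)) := by
  induction k with
  | zero => exact .single (h i)
  | succ k ih => exact ih.tail (h _)

theorem chain_glt {eP : List D × P → Set O} {eO : List D × O → Set (D × P)}
    {t : ℕ → List D × (P ⊕ O)} (h : ∀ n, Edge eP eO (t n) (t (n+1))) {i j : ℕ} (hij : i < j) :
    Glt (t i) (t j) := by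
  induction j, hij using Nat.le_induction with
  | base => exact edge_glt (h i)
  | succ j _ ih => exact glt_trans ih (edge_glt (h j))

theorem chain_glt_iff {eP : List D × P → Set O} {eO : List D × O → Set (D × P)}
    {t : ℕ → List D × (P ⊕ O)} (h : ∀ n, Edge eP eO (t n) (t (n+1))) {i j : ℕ} :
    Glt (t i) (t j) ↔ i < j := by
  refine ⟨fun hg => ?_, chain_glt h⟩
  have h1 := glt_meas hg
  rcases lt_trichotomy i j with h2 | h2 | h2
  · exact h2
  · subst h2; omega
  · have := glt_meas (chain_glt h h2); omega

theorem play_of_seq {α : Type*} {r : α → α → Prop} {t : ℕ → α} (h : ∀ n, r (t n) (t (n+1))) :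
    IsPlay r (t 0) (Set.range t) := by
  have tr : ∀ i j, i < j → Relation.TransGen r (t i) (t j) := by
    intro i j hij
    obtain ⟨k, rfl⟩ := Nat.exists_eq_add_of_lt hij
    exact chain_trans h i k
  refine ⟨⟨0, rfl⟩, ?_, ?_, ?_⟩
  · rintro _ ⟨n, rfl⟩
    rcases Nat.eq_zero_or_pos n with rfl | hn
    · exact .refl
    · exact (tr 0 n hn).to_reflTransGen
  · rintro _ ⟨n, rfl⟩
    exact ⟨_, ⟨n+1, rfl⟩, h n⟩
  · rintro _ ⟨i, rfl⟩ _ ⟨j, rfl⟩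
    rcases lt_trichotomy i j with h2 | h2 | h2
    · exact Or.inl (tr _ _ h2)
    · exact Or.inr (Or.inl (by rw [h2]))
    · exact Or.inr (Or.inr (tr _ _ h2))

theorem seq_of_play {eP : List D × P → Set O} {eO : List D × O → Set (D × P)}
    {u₀ : List D × (P ⊕ O)} {U : Set (List D × (P ⊕ O))} (h : IsPlay (Edge eP eO) u₀ U) :
    ∃ t : ℕ → List D × (P ⊕ O), t 0 = u₀ ∧ (∀ n, Edge eP eO (t n) (t (n+1))) ∧ U = Set.range t := by
  obtain ⟨h0, h1, h2, h3⟩ := h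
  choose f hf hfe using h2
  let T : ℕ → U := fun n => Nat.rec ⟨u₀, h0⟩ (fun _ v => ⟨f v.1 v.2, hf v.1 v.2⟩) n
  have hT : ∀ n, Edge eP eO (T n).1 (T (n+1)).1 := fun n => hfe _ _
  have hm : ∀ n, gmeas (T n).1 = gmeas u₀ + n := by
    intro n
    induction n with
    | zero => rfl
    | succ n ih => have := edge_meas (hT n); omega
  refine ⟨fun n => (T n).1, rfl, hT, ?_⟩
  ext u
  constructor
  · intro hu
    have hle : gmeas u₀ ≤ gmeas u := by
      rcases Relation.reflTransGen_iff_eq_or_transGen.1 (h1 u hu) with e | e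
      · rw [e]
      · exact (trans_meas e).le
    refine ⟨gmeas u - gmeas u₀, ?_⟩
    have := hm (gmeas u - gmeas u₀)
    rcases h3 _ (T (gmeas u - gmeas u₀)).2 u hu with e | e | e
    · have := trans_meas e; omega
    · exact e
    · have := trans_meas e; omega
  · rintro ⟨n, rfl⟩
    exact (T n).2

theorem par_seq {Q : Type*} {eP : List D × Q → Set (Q × Set (D × Q))}
    {eO : List D × (Q × Set (D × Q)) → Set (D × Q)} (c : Q → ℕ)
    {t : ℕ → List D × (Q ⊕ Q × Set (D × Q))} (h : ∀ n, Edge eP eO (t n) (t (n+1))) :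
    Par c (Set.range t) ↔ WinSeq (HatC c) Even t := by
  simp only [Par, WinSeq, Set.forall_mem_range, Set.exists_range_iff, chain_glt_iff h]

theorem win_half {V W : Type*} {b : V → ℕ} {a : W → ℕ} {E : ℕ → Prop} {t : ℕ → V} {s : ℕ → W}
    (h : ∀ n, b (t n) = a (s (n/2))) : WinSeq b E t ↔ WinSeq a E s := by
  simp only [WinSeq, h]
  constructor
  · rintro ⟨m, hm, h1, n, h2⟩
    refine ⟨m, hm, fun n => ?_, n, fun j hj => ?_⟩
    · obtain ⟨j, hj, e⟩ := h1 (2*n+1)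
      exact ⟨j/2, by omega, e⟩
    · have := h2 (2*j) (by omega)
      rwa [show 2*j/2 = j by omega] at this
  · rintro ⟨m, hm, h1, n, h2⟩
    refine ⟨m, hm, fun n => ?_, 2*n+1, fun j hj => h2 (j/2) (by omega)⟩
    obtain ⟨j, hj, e⟩ := h1 n
    exact ⟨2*j, by omega, by rwa [show 2*j/2 = j by omega]⟩

def gpost {Q : Type*} (v : List D × Q) (C : Set (D × Q)) : Set (List D × Q) :=
  {w | ∃ d q, (d, q) ∈ C ∧ w = (v.1 ++ [d], q)}

theorem accepts_iff {Q A : Type*} (δ : Q × A → Set (Set (D × Q))) (c : Q → ℕ) (q₀ : Q)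
    (F : List D → A) : Accepts δ c q₀ F ↔
    ∃ τ : List D × Q → Set (D × Q), (∀ v, τ v ∈ δ (v.2, F v.1)) ∧
      ∀ s : ℕ → List D × Q, s 0 = ([], q₀) → (∀ n, s (n+1) ∈ gpost (s n) (τ (s n))) →
        WinSeq (fun v => c v.2) Even s := by
  constructor
  · rintro ⟨σ, hσ, hw⟩
    refine ⟨fun v => (σ v).2, fun v => (hσ v).2, fun s h0 hs => ?_⟩
    let t : ℕ → List D × (Q ⊕ Q × Set (D × Q)) := fun n =>
      if n % 2 = 0 then ((s (n/2)).1, Sum.inl (s (n/2)).2) else ((s (n/2)).1, Sum.inr (σ (s (n/2))))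
    have ht : ∀ n, Edge (fun p => ({σ p} : Set (Q × Set (D × Q)))) AccEO (t n) (t (n+1)) := by
      intro n
      rcases Nat.mod_two_eq_zero_or_one n with h | h
      · have h' : (n+1) % 2 ≠ 0 := by omega
        have e : (n+1)/2 = n/2 := by omega
        refine Or.inl ⟨(s (n/2)).1, (s (n/2)).2, σ (s (n/2)), ?_, ?_, rfl⟩
        · simp only [t, if_pos h]
        · simp only [t, if_neg h', e]
      · have h' : (n+1) % 2 = 0 := by omega
        have h'' : n % 2 ≠ 0 := by omega
        have e : (n+1)/2 = n/2 + 1 := by omega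
        obtain ⟨d, q, hdq, hq⟩ := hs (n/2)
        refine Or.inr ⟨(s (n/2)).1, σ (s (n/2)), d, q, ?_, ?_, hdq⟩
        · simp only [t, if_neg h'']
        · simp only [t, if_pos h', e, hq]
    have h := hw (Set.range t) (by
      have := play_of_seq ht
      have e : t 0 = ([], Sum.inl q₀) := by simp [t, h0]
      rwa [e] at this)
    rw [par_seq c ht] at h
    refine (win_half ?_).1 h
    intro n
    by_cases hn : n % 2 = 0
    · simp only [t, if_pos hn, HatC, Sum.elim_inl]
    · simp only [t, if_neg hn, HatC, Sum.elim_inr, (hσ (s (n/2))).1]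
  · rintro ⟨τ, hτ, hw⟩
    refine ⟨fun v => (v.2, τ v), fun v => ⟨rfl, hτ v⟩, fun U hU => ?_⟩
    obtain ⟨t, h0, ht, rfl⟩ := seq_of_play hU
    rw [par_seq c ht]
    have stepl : ∀ n (v : List D × Q), t n = (v.1, Sum.inl v.2) → t (n+1) = (v.1, Sum.inr (v.2, τ v)) := by
      intro n v hv
      rcases ht n with ⟨x, k, l, e1, e2, hl⟩ | ⟨x, l, d, k, e1, e2, hl⟩
      · rw [hv] at e1
        simp only [Prod.mk.injEq, Sum.inl.injEq] at e1
        obtain ⟨rfl, rfl⟩ := e1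
        rw [e2, Set.mem_singleton_iff.1 hl]
      · rw [hv] at e1
        simp at e1
    have stepr : ∀ n (v : List D × Q), t n = (v.1, Sum.inr (v.2, τ v)) →
        ∃ w ∈ gpost v (τ v), t (n+1) = (w.1, Sum.inl w.2) := by
      intro n v hv
      rcases ht n with ⟨x, k, l, e1, e2, hl⟩ | ⟨x, l, d, k, e1, e2, hl⟩
      · rw [hv] at e1
        simp at e1
      · rw [hv] at e1
        simp only [Prod.mk.injEq, Sum.inr.injEq] at e1
        obtain ⟨rfl, rfl⟩ := e1
        exact ⟨_, ⟨d, k, hl, rfl⟩, e2⟩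
    have hex : ∀ n, ∃ v : List D × Q, t (2*n) = (v.1, Sum.inl v.2) := by
      intro n
      induction n with
      | zero => exact ⟨([], q₀), h0⟩
      | succ n ih =>
        obtain ⟨v, hv⟩ := ih
        obtain ⟨w, _, hw⟩ := stepr _ v (stepl _ v hv)
        exact ⟨w, hw⟩
    choose s hs using hex
    have hs0 : s 0 = ([], q₀) := by
      have := hs 0
      rw [Nat.mul_zero, h0] at this
      simp only [Prod.mk.injEq, Sum.inl.injEq] at this
      exact Prod.ext this.1.symm this.2.symm
    have hss : ∀ n, s (n+1) ∈ gpost (s n) (τ (s n)) := by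
      intro n
      obtain ⟨w, hw1, hw2⟩ := stepr _ _ (stepl _ _ (hs n))
      have := hs (n+1)
      rw [show 2*(n+1) = 2*n+1+1 by ring, hw2] at this
      simp only [Prod.mk.injEq, Sum.inl.injEq] at this
      have e : w = s (n+1) := Prod.ext this.1 this.2
      rwa [← e]
    refine (win_half ?_).2 (hw s hs0 hss)
    intro n
    rcases Nat.even_or_odd' n with ⟨k, rfl | rfl⟩
    · rw [hs, show 2*k/2 = k by omega]; rfl
    · rw [stepl _ _ (hs k), show (2*k+1)/2 = k by omega]; rfl

theorem win_unique {V : Type*} {c : V → ℕ} {s : ℕ → V}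
    (h : WinSeq c Even s) (h' : WinSeq (fun v => c v + 1) Even s) : False := by
  obtain ⟨m, hm, h1, n, h2⟩ := h
  obtain ⟨m', hm', h1', n', h2'⟩ := h'
  obtain ⟨j, hj, e⟩ := h1 n'
  obtain ⟨j', hj', e'⟩ := h1' n
  have a := h2 j' hj'
  have b := h2' j hj
  simp only at e' b
  have : m' = m + 1 := by omega
  subst this
  exact (Nat.even_add_one.1 hm') hm

end Plays

theorem complementation {Alph Q : Type*} [Fintype D] [Nonempty D]
    [Fintype Alph] [Nonempty Alph] [Fintype Q] [Nonempty Q]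
    (δ : Q × Alph → Set (Set (D × Q))) (c : Q → ℕ) (q₀ : Q)
    (hA : AutWF δ) (F : List D → Alph) :
    Accepts
      (fun p => {Cb : Set (D × Q) | Cb.Nonempty ∧ ∀ C ∈ δ p, (Cb ∩ C).Nonempty})
      (fun q => c q + 1) q₀ F ↔ ¬ Accepts δ c q₀ F := by
  classical
  rw [accepts_iff, accepts_iff]
  constructor
  · rintro ⟨τ', hτ', hw'⟩ ⟨τ, hτ, hw⟩
    have hex : ∀ v : List D × Q, ∃ w, w ∈ gpost v (τ v) ∧ w ∈ gpost v (τ' v) := by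
      intro v
      obtain ⟨⟨d, q⟩, h1, h2⟩ := (hτ' v).2 _ (hτ v)
      exact ⟨_, ⟨d, q, h2, rfl⟩, ⟨d, q, h1, rfl⟩⟩
    choose f hf hf' using hex
    let s : ℕ → List D × Q := fun n => Nat.rec ([], q₀) (fun _ v => f v) n
    exact win_unique (hw s rfl (fun n => hf _)) (hw' s rfl (fun n => hf' _))
  · intro hn
    obtain ⟨K, hK⟩ : ∃ K, ∀ v : List D × Q, c v.2 < K := by
      obtain ⟨K, hK⟩ := (Set.finite_range c).bddAbove
      exact ⟨K + 1, fun v => Nat.lt_succ_of_le (hK ⟨v.2, rfl⟩)⟩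
    let M : List D × Q → Set (Set (D × Q)) := fun v => δ (v.2, F v.1)
    let M' : List D × Q → Set (Set (D × Q)) := fun v =>
      {Cb : Set (D × Q) | Cb.Nonempty ∧ ∀ C ∈ δ (v.2, F v.1), (Cb ∩ C).Nonempty}
    have hM : ∀ v, (M v).Nonempty := fun v => (hA _ _).1
    have hM' : ∀ v, (M' v).Nonempty := by
      intro v
      obtain ⟨C, hC⟩ := hM v
      obtain ⟨p, hp⟩ := (hA _ _).2 C hC
      refine ⟨Set.univ, ⟨p, trivial⟩, fun C' hC' => ?_⟩
      rw [Set.univ_inter]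
      exact (hA _ _).2 C' hC'
    have hd : ∀ X, Cpre M' gpost X = (Cpre M gpost Xᶜ)ᶜ := by
      intro X
      ext v
      constructor
      · rintro ⟨Cb, hCb, hX⟩ ⟨C, hC, hX'⟩
        obtain ⟨⟨d, q⟩, h1, h2⟩ := hCb.2 C hC
        exact hX' ⟨d, q, h2, rfl⟩ (hX ⟨d, q, h1, rfl⟩)
      · intro h
        have key : ∀ C ∈ M v, ({p : D × Q | (v.1 ++ [p.1], p.2) ∈ X} ∩ C).Nonempty := by
          intro C hC
          by_contra hne
          refine h ⟨C, hC, ?_⟩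
          rintro _ ⟨d, q, hdq, rfl⟩ hx
          exact hne ⟨(d, q), hx, hdq⟩
        refine ⟨{p : D × Q | (v.1 ++ [p.1], p.2) ∈ X}, ⟨?_, key⟩, ?_⟩
        · obtain ⟨C, hC⟩ := hM v
          exact (key C hC).mono Set.inter_subset_left
        · rintro _ ⟨d, q, hdq, rfl⟩
          exact hdq
    by_cases h0 : (([], q₀) : List D × Q) ∈ PPhi (Cpre M gpost) (fun v => c v.2) Even K 0 ∅
    · exact absurd (strat0 M hM gpost _ Even K hK _ h0) hn
    · have hc := PPhi_compl (Cpre M gpost) (Cpre M' gpost) hd (fun v => c v.2) Even K 0 ∅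
        (by simpa using hK) (by simp)
      have h1 : (([], q₀) : List D × Q) ∈ (PPhi (Cpre M gpost) (fun v => c v.2) Even K 0 ∅)ᶜ := h0
      rw [hc] at h1
      have e : ({v : List D × Q | c v.2 < 0} \ ∅) = ∅ := by
        ext v; simp
      rw [e] at h1
      obtain ⟨τ, hτ, hw⟩ := strat0 M' hM' gpost _ _ K hK _ h1
      refine ⟨τ, hτ, fun s hs0 hs => ?_⟩
      obtain ⟨m, hm, h1, n, h2⟩ := hw s hs0 hs
      refine ⟨m + 1, Nat.even_add_one.2 hm, fun n => ?_, n, fun j hj => ?_⟩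
      · obtain ⟨j, hj, e⟩ := h1 n
        exact ⟨j, hj, congrArg (· + 1) e⟩
      · exact Nat.succ_le_succ (h2 j hj)


end TreeGames
end
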